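/- Let ℓ be a permutation invariant loss function such that for every x ∈ ℝ^d with ℓ(x) ≥ 0 the map u ↦ ℓ(x + u) is strictly convex along zero-sum directions, i.e., for all u ≠ v in ℝ^d with ∑_k (u_k − v_k) = 0 and all α ∈ (0,1), ℓ(x + αu + (1−α)v) < αℓ(x + u) + (1−α)ℓ(x + v). Then for every X ∈ M^θ the risk allocation is unique: there is exactly one m ∈ A(X) with ∑_k m_k = R(X). -/

import Mathlib

/-!
By (A3) there is a point with `ℓ ≥ 0`, and translating the strictness hypothesis from that point
shows that `ℓ` is strictly midpoint convex along *all* zero-sum directions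
(`ZeroSumStrict.midpoint`). As soon as such a direction exists, that is for `d ≥ 2`, every point is
a strict midpoint, so `ℓ` is finite (`ZeroSumStrict.ne_top`) and `ℓ(X - m)` is integrable for every
`m`.

**Existence.** The acceptance set is nonempty, by dominated convergence along the allocations
`(n, …, n)` (`acceptSet_nonempty`), and closed, by Fatou's lemma applied to the nonnegative lower
semicontinuous slack `ℓ(x) - ∑ₖ xₖ + c` (`isClosed_acceptSet`). Its elements of bounded total form a
bounded set (`exists_bound_acceptSet`). For `d ≤ 1` the total, bounded below by (A3), determines the
allocation. For `d ≥ 2`, Jensen's inequality gives `ℓ(E[X] - m) ≤ 0`. On a plane of fixed coordinate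
sum, averaging over cyclic shifts shows that the permutation invariant function `ℓ` attains its
minimum on the diagonal (`diag_le_of_perm`); strictness makes this minimum unique, and compactness
of the unit sphere turns it into linear growth (`exists_bound_zeroSum`). The total is therefore
minimised over a nonempty compact set.

**Uniqueness.** The midpoint `n` of two distinct minimisers has the same total, and strict convexity
gives `E[ℓ(X - n)] < 0`. By convexity, `n - (ε, …, ε)` is still acceptable for small `ε > 0`, and
its total is strictly smaller, a contradiction (`eq_of_isMin_acceptSet`).
-/

open MeasureTheory ENNReal Pointwise

/-- The positive part of an extended real number, valued in `ℝ≥0∞`. -/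
noncomputable def ERealPos (e : EReal) : ℝ≥0∞ := (max e 0).abs

/-- Extended expectation of a `(-∞,∞]`-valued integrand, as an extended real. -/
noncomputable def eexp {Ω : Type*} [MeasurableSpace Ω] (P : Measure Ω)
    (g : Ω → EReal) : EReal :=
  ((∫⁻ ω, ERealPos (g ω) ∂P) : EReal) - ((∫⁻ ω, ERealPos (-(g ω)) ∂P) : EReal)

/-- A loss function `ℓ : ℝ^d → (-∞,∞]` with constant `c` as in (A3):
(A1) increasing, (A2) convex, lower semicontinuous with `inf ℓ < 0`,
(A3) `ℓ x ≥ ∑ₖ xₖ - c`. -/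
structure IsLossFunction {d : ℕ} (ℓ : (Fin d → ℝ) → EReal) (c : ℝ) : Prop where
  mono : Monotone ℓ
  convex : ∀ x y : Fin d → ℝ, ∀ a b : ℝ, 0 ≤ a → 0 ≤ b → a + b = 1 →
    ℓ (a • x + b • y) ≤ (a : EReal) * ℓ x + (b : EReal) * ℓ y
  lsc : LowerSemicontinuous ℓ
  inf_lt_zero : (⨅ x, ℓ x) < 0
  lower_bound : ∀ x, ((∑ k, x k : ℝ) : EReal) - (c : EReal) ≤ ℓ x

/-- Membership in the Orlicz heart `M^θ` where `θ x = ℓ |x|`: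
`X` is measurable and `E[θ(λX)] < ∞` for all `λ > 0`. -/
def MemOrliczHeart {Ω : Type*} [MeasurableSpace Ω] {d : ℕ}
    (ℓ : (Fin d → ℝ) → EReal) (P : Measure Ω) (X : Ω → Fin d → ℝ) : Prop :=
  Measurable X ∧ ∀ lam : ℝ, 0 < lam → eexp P (fun ω => ℓ |lam • X ω|) < ⊤

/-- The acceptance set `A(X) = {m : E[ℓ(X - m)] ≤ 0}`. -/
def acceptSet {Ω : Type*} [MeasurableSpace Ω] {d : ℕ}
    (ℓ : (Fin d → ℝ) → EReal) (P : Measure Ω) (X : Ω → Fin d → ℝ) : Set (Fin d → ℝ) :=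
  {m | eexp P (fun ω => ℓ (X ω - m)) ≤ 0}

/-- The multivariate shortfall risk `R(X) = inf {∑ₖ mₖ : m ∈ A(X)}`. -/
noncomputable def shortfallRisk {Ω : Type*} [MeasurableSpace Ω] {d : ℕ}
    (ℓ : (Fin d → ℝ) → EReal) (P : Measure Ω) (X : Ω → Fin d → ℝ) : ℝ :=
  sInf {s : ℝ | ∃ m ∈ acceptSet ℓ P X, s = ∑ k, m k}

open Filter Topology

/-! ### The extended expectation -/

theorem eRealPos_eq (e : EReal) : ERealPos e = e.toENNReal := by
  unfold ERealPos
  rcases le_total e 0 with h | h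
  · rw [max_eq_right h, EReal.toENNReal_of_nonpos h, EReal.abs_zero]
  · rw [max_eq_left h]
    induction e with
    | bot => simp at h
    | top => simp
    | coe r =>
      rw [EReal.abs_def, EReal.real_coe_toENNReal, abs_of_nonneg (by exact_mod_cast h)]

/-- `EReal` subtraction `⊤ - ⊤ = ⊥` is harmless here: the sign of `eexp` is decided by comparing the
integrals of the positive and negative parts in `ℝ≥0∞`. -/
theorem eexp_nonpos_iff {Ω : Type*} [MeasurableSpace Ω] (P : Measure Ω) (g : Ω → EReal) :
    eexp P g ≤ 0 ↔ ∫⁻ ω, (g ω).toENNReal ∂P ≤ ∫⁻ ω, (-(g ω)).toENNReal ∂P := by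
  unfold eexp
  simp only [eRealPos_eq]
  rw [EReal.sub_nonpos, EReal.coe_ennreal_le_coe_ennreal_iff]

/-- A measurable function with an integrable minorant has integrable negative part, so a
finite `eexp` forces its positive part to be integrable as well. -/
theorem integrable_of_eexp_lt_top {Ω : Type*} [MeasurableSpace Ω] (P : Measure Ω)
    {f g : Ω → ℝ} (hf : Measurable f) (hg : Integrable g P) (hgf : ∀ ω, g ω ≤ f ω)
    (h : eexp P (fun ω => (f ω : EReal)) < ⊤) : Integrable f P := by
  have hneg : ∫⁻ ω, ENNReal.ofReal (-f ω) ∂P ≠ ⊤ := by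
    refine ne_top_of_le_ne_top hg.neg.lintegral_lt_top.ne ?_
    exact lintegral_mono fun ω => ENNReal.ofReal_le_ofReal (neg_le_neg (hgf ω))
  have hpos : ∫⁻ ω, ENNReal.ofReal (f ω) ∂P ≠ ⊤ := by
    intro htop
    unfold eexp at h
    simp only [eRealPos_eq, ← EReal.coe_neg, EReal.real_coe_toENNReal, htop] at h
    rw [EReal.coe_ennreal_top, EReal.top_sub] at h
    · exact lt_irrefl _ h
    · simpa using hneg
  refine ⟨hf.aestronglyMeasurable, ?_⟩
  unfold HasFiniteIntegral
  have : ∀ ω, ‖f ω‖ₑ = ENNReal.ofReal (f ω) + ENNReal.ofReal (-f ω) := by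
    intro ω
    rw [Real.enorm_eq_ofReal_abs]
    rcases le_total 0 (f ω) with h0 | h0
    · rw [abs_of_nonneg h0, ENNReal.ofReal_of_nonpos (p := -f ω) (by linarith), add_zero]
    · rw [abs_of_nonpos h0, ENNReal.ofReal_of_nonpos h0, zero_add]
  simp only [this]
  rw [lintegral_add_left hf.ennreal_ofReal]
  exact ENNReal.add_lt_top.2 ⟨hpos.lt_top, hneg.lt_top⟩

theorem eexp_coe_nonpos_iff {Ω : Type*} [MeasurableSpace Ω] (P : Measure Ω)
    {f : Ω → ℝ} (hf : Integrable f P) :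
    eexp P (fun ω => (f ω : EReal)) ≤ 0 ↔ ∫ ω, f ω ∂P ≤ 0 := by
  rw [eexp_nonpos_iff, integral_eq_lintegral_pos_part_sub_lintegral_neg_part hf, sub_nonpos]
  exact (ENNReal.toReal_le_toReal hf.lintegral_lt_top.ne hf.neg.lintegral_lt_top.ne).symm

/-! ### The Orlicz heart -/

section
variable {Ω : Type*} [MeasurableSpace Ω] {P : Measure Ω} [IsProbabilityMeasure P]
  {d : ℕ} {ℓ : (Fin d → ℝ) → EReal} {c : ℝ}

theorem IsLossFunction.ne_bot (hℓ : IsLossFunction ℓ c) (x : Fin d → ℝ) : ℓ x ≠ ⊥ := by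
  intro h
  have := hℓ.lower_bound x
  rw [h, ← EReal.coe_sub, le_bot_iff] at this
  exact EReal.coe_ne_bot _ this

theorem IsLossFunction.sum_abs_le (hℓ : IsLossFunction ℓ c) (x : Fin d → ℝ) :
    ((∑ j, |x j| - c : ℝ) : EReal) ≤ ℓ |(1 : ℝ) • x| := by
  have := hℓ.lower_bound |(1 : ℝ) • x|
  simpa using this

/-- The positive part of `ℓ |X|` is integrable, since (A3) bounds the negative part by `|c|`. -/
theorem MemOrliczHeart.lintegral_ne_top (hℓ : IsLossFunction ℓ c) {X : Ω → Fin d → ℝ}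
    (hX : MemOrliczHeart ℓ P X) : ∫⁻ ω, (ℓ |(1 : ℝ) • X ω|).toENNReal ∂P ≠ ⊤ := by
  have hneg : ∫⁻ ω, (-ℓ |(1 : ℝ) • X ω|).toENNReal ∂P ≠ ⊤ := by
    refine ne_top_of_le_ne_top (b := ∫⁻ _, ENNReal.ofReal c ∂P) (by simp) ?_
    refine lintegral_mono fun ω => ?_
    rw [← EReal.real_coe_toENNReal]
    refine EReal.toENNReal_le_toENNReal ?_
    rw [EReal.neg_le, ← EReal.coe_neg]
    refine le_trans ?_ (hℓ.sum_abs_le (X ω))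
    have : 0 ≤ ∑ j, |X ω j| := Finset.sum_nonneg fun j _ => abs_nonneg _
    exact_mod_cast (by linarith : -c ≤ ∑ j, |X ω j| - c)
  intro htop
  have h := hX.2 1 one_pos
  unfold eexp at h
  simp only [eRealPos_eq] at h
  rw [htop, EReal.coe_ennreal_top, EReal.top_sub] at h
  · exact lt_irrefl _ h
  · simpa using hneg

/-- Each coordinate is integrable because (A3) gives `|Xₖ| ≤ ∑ⱼ |Xⱼ| ≤ ℓ |X| + c`. -/
theorem MemOrliczHeart.integrable (hℓ : IsLossFunction ℓ c) {X : Ω → Fin d → ℝ}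
    (hX : MemOrliczHeart ℓ P X) (k : Fin d) : Integrable (fun ω => X ω k) P := by
  have hm : Measurable X := hX.1
  have hk : ∀ k, Measurable fun ω => X ω k := fun k => (measurable_pi_apply k).comp hm
  have hpos := hX.lintegral_ne_top hℓ
  refine ⟨(hk k).aestronglyMeasurable, ?_⟩
  unfold HasFiniteIntegral
  refine lt_of_le_of_lt (lintegral_mono (g := fun ω =>
    (ℓ |(1 : ℝ) • X ω|).toENNReal + ENNReal.ofReal |c|) fun ω => ?_) ?_
  · have h1 : ENNReal.ofReal (∑ j, |X ω j| - c) ≤ (ℓ |(1 : ℝ) • X ω|).toENNReal := by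
      rw [← EReal.real_coe_toENNReal]
      exact EReal.toENNReal_le_toENNReal (hℓ.sum_abs_le (X ω))
    refine le_trans ?_ (add_le_add_left h1 _)
    refine le_trans ?_ ENNReal.ofReal_add_le
    rw [Real.enorm_eq_ofReal_abs]
    refine ENNReal.ofReal_le_ofReal ?_
    have := Finset.single_le_sum (f := fun j => |X ω j|) (fun j _ => abs_nonneg _)
      (Finset.mem_univ k)
    have := le_abs_self c
    simp only at *
    linarith
  · rw [lintegral_add_right _ measurable_const]
    exact ENNReal.add_lt_top.2 ⟨hpos.lt_top, by simp⟩

theorem IsLossFunction.measurable_comp (hℓ : IsLossFunction ℓ c) {X : Ω → Fin d → ℝ}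
    (hX : Measurable X) : Measurable fun ω => ℓ (X ω) :=
  hℓ.lsc.measurable.comp hX

/-! ### Closedness of the acceptance set -/

/-- The slack in the lower bound `ℓ x ≥ ∑ₖ xₖ - c`, a nonnegative extended number that equals `⊤`
exactly where `ℓ` does. -/
noncomputable def lossSlack (ℓ : (Fin d → ℝ) → EReal) (c : ℝ) (x : Fin d → ℝ) : ℝ≥0∞ :=
  (ℓ x + ((c - ∑ k, x k : ℝ) : EReal)).toENNReal

theorem IsLossFunction.lsc_slack (hℓ : IsLossFunction ℓ c) :
    LowerSemicontinuous (lossSlack ℓ c) := by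
  have h1 : LowerSemicontinuous fun x : Fin d → ℝ => ((c - ∑ k, x k : ℝ) : EReal) :=
    (continuous_coe_real_ereal.comp (by fun_prop)).lowerSemicontinuous
  refine EReal.continuous_toENNReal.comp_lowerSemicontinuous
    (hℓ.lsc.add' h1 fun x => EReal.continuousAt_add (Or.inr ?_) (Or.inr ?_)) ?_
  · exact EReal.coe_ne_bot _
  · exact EReal.coe_ne_top _
  · exact fun _ _ h => EReal.toENNReal_le_toENNReal h

/-- Splitting `ℓ = slack + (∑ₖ xₖ - c)` into positive and negative parts, without subtraction. -/
theorem IsLossFunction.slack_parts (hℓ : IsLossFunction ℓ c) (x : Fin d → ℝ) :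
    (ℓ x).toENNReal + ENNReal.ofReal (-(∑ k, x k - c)) =
      lossSlack ℓ c x + ENNReal.ofReal (∑ k, x k - c) + (-ℓ x).toENNReal := by
  have hb := hℓ.lower_bound x
  have hbot := hℓ.ne_bot x
  unfold lossSlack
  generalize ℓ x = e at *
  induction e with
  | bot => exact absurd rfl hbot
  | top => rw [EReal.top_add_coe]; simp
  | coe r =>
    rw [← EReal.coe_sub, EReal.coe_le_coe_iff] at hb
    rw [← EReal.coe_add, ← EReal.coe_neg]
    simp only [EReal.real_coe_toENNReal]
    set t := ∑ k, x k
    rw [← ENNReal.toReal_eq_toReal_iff' (by simp) (by simp)]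
    simp only [ENNReal.toReal_add, ENNReal.toReal_ofReal', ne_eq, ENNReal.ofReal_ne_top,
      not_false_eq_true, ENNReal.add_eq_top, or_self]
    rw [max_eq_left (by linarith : 0 ≤ r + (c - t))]
    have h1 := max_zero_sub_eq_self r
    have h2 := max_zero_sub_eq_self (t - c)
    linarith

/-- Acceptability in terms of the slack: formally `E[ℓ(X - m)] = E[slack(X - m)] + ρ(m)` with
`ρ(m) = E[∑ₖ Xₖ] - c - ∑ₖ mₖ`, so the condition is `E[slack(X - m)] + ρ(m) ≤ 0`. It is written in
`ℝ≥0∞` with `ρ = ρ⁺ - ρ⁻`, a form to which Fatou's lemma applies. -/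
theorem mem_acceptSet_iff (hℓ : IsLossFunction ℓ c) {X : Ω → Fin d → ℝ}
    (hX : Measurable X) (hXi : ∀ k, Integrable (fun ω => X ω k) P) (m : Fin d → ℝ) :
    m ∈ acceptSet ℓ P X ↔
      ∫⁻ ω, (lossSlack ℓ c (X ω - m) +
        ENNReal.ofReal ((∫ ω, ∑ k, X ω k ∂P) - c - ∑ k, m k)) ∂P ≤
          ENNReal.ofReal (-((∫ ω, ∑ k, X ω k ∂P) - c - ∑ k, m k)) := by
  have hS : Integrable (fun ω => ∑ k, X ω k) P := integrable_finsetSum _ fun k _ => hXi k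
  set ρ : ℝ := (∫ ω, ∑ k, X ω k ∂P) - c - ∑ k, m k with hρ
  let r : Ω → ℝ := fun ω => ∑ k, (X ω - m) k - c
  have hreq : r = fun ω => ∑ k, X ω k - (c + ∑ k, m k) := by
    funext ω; simp [r, Finset.sum_sub_distrib]; ring
  have hr : Integrable r P := by rw [hreq]; exact hS.sub (integrable_const _)
  have hrρ : ∫ ω, r ω ∂P = ρ := by
    rw [hreq, integral_sub hS (integrable_const _)]; simp [hρ]; ring
  have hXm : Measurable fun ω => X ω - m := hX.sub_const m
  have hk : ∀ k, Measurable fun ω => (X ω - m) k := fun k => (measurable_pi_apply k).comp hXm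
  have hrm : Measurable r := (Finset.measurable_sum _ fun k _ => hk k).sub_const c
  have hℓm := hℓ.measurable_comp hXm
  have hslm : Measurable fun ω => lossSlack ℓ c (X ω - m) := hℓ.lsc_slack.measurable.comp hXm
  set H := ∫⁻ ω, lossSlack ℓ c (X ω - m) ∂P
  set p := ∫⁻ ω, (ℓ (X ω - m)).toENNReal ∂P with hp
  set N := ∫⁻ ω, (-ℓ (X ω - m)).toENNReal ∂P with hN
  set Q := ∫⁻ ω, ENNReal.ofReal (r ω) ∂P
  set B := ∫⁻ ω, ENNReal.ofReal (-r ω) ∂P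
  have hQ : Q ≠ ⊤ := hr.lintegral_lt_top.ne
  have hB : B ≠ ⊤ := hr.neg.lintegral_lt_top.ne
  have hNB : N ≤ B := by
    refine lintegral_mono fun ω => ?_
    rw [← EReal.real_coe_toENNReal]
    refine EReal.toENNReal_le_toENNReal ?_
    rw [EReal.neg_le, ← EReal.coe_neg, neg_neg]
    exact hℓ.lower_bound _
  have hNt : N ≠ ⊤ := ne_top_of_le_ne_top hB hNB
  -- integrating the pointwise splitting of `ℓ` into slack and affine part
  have e1 : p + B = H + Q + N := by
    have hf : Measurable fun ω => lossSlack ℓ c (X ω - m) + ENNReal.ofReal (r ω) :=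
      hslm.add hrm.ennreal_ofReal
    rw [← lintegral_add_left hℓm.ereal_toENNReal, ← lintegral_add_left hslm,
      ← lintegral_add_left hf]
    exact lintegral_congr fun ω => hℓ.slack_parts (X ω - m)
  -- `Q - B = ρ`, i.e. the expectation of `r`, without subtraction
  have e2 : Q + ENNReal.ofReal (-ρ) = B + ENNReal.ofReal ρ := by
    rw [← ENNReal.toReal_eq_toReal_iff' (by simp [hQ]) (by simp [hB]),
      ENNReal.toReal_add hQ (by simp), ENNReal.toReal_add hB (by simp),
      ENNReal.toReal_ofReal', ENNReal.toReal_ofReal']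
    have h3 := integral_eq_lintegral_pos_part_sub_lintegral_neg_part hr
    rw [hrρ] at h3
    have h2 := max_zero_sub_eq_self ρ
    change ρ = Q.toReal - B.toReal at h3
    linarith
  have hlhs : ∫⁻ ω, (lossSlack ℓ c (X ω - m) + ENNReal.ofReal ρ) ∂P = H + ENNReal.ofReal ρ := by
    rw [lintegral_add_right _ measurable_const]; simp [H]
  rw [hlhs]
  change eexp P _ ≤ 0 ↔ _
  rw [eexp_nonpos_iff, ← hp, ← hN, ← ENNReal.add_le_add_iff_right hB, e1, add_comm N B,
    ENNReal.add_le_add_iff_right hNt,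
    ← ENNReal.add_le_add_iff_right (a := ENNReal.ofReal (-ρ)) (by simp), add_assoc, e2]
  rw [← add_assoc, add_right_comm H, add_comm B, ENNReal.add_le_add_iff_right hB]

/-- Fatou's lemma for the nonnegative slack, together with lower semicontinuity of `ℓ`. -/
theorem isClosed_acceptSet (hℓ : IsLossFunction ℓ c) {X : Ω → Fin d → ℝ}
    (hX : Measurable X) (hXi : ∀ k, Integrable (fun ω => X ω k) P) :
    IsClosed (acceptSet ℓ P X) := by
  refine IsSeqClosed.isClosed fun u m hu hum => ?_
  simp only [mem_acceptSet_iff hℓ hX hXi] at hu ⊢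
  have hρ : Continuous fun m : Fin d → ℝ => (∫ ω, ∑ k, X ω k ∂P) - c - ∑ k, m k := by fun_prop
  set ρ : (Fin d → ℝ) → ℝ := fun m => (∫ ω, ∑ k, X ω k ∂P) - c - ∑ k, m k
  have hlim : Tendsto (fun n => ENNReal.ofReal (-ρ (u n))) atTop (𝓝 (ENNReal.ofReal (-ρ m))) :=
    (ENNReal.continuous_ofReal.comp hρ.neg).continuousAt.tendsto.comp hum
  refine le_trans (lintegral_mono (g := fun ω => liminf (fun n => lossSlack ℓ c (X ω - u n) +
    ENNReal.ofReal (ρ (u n))) atTop) fun ω => ?_) ((lintegral_liminf_le fun n => ?_).trans ?_)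
  · have hF : LowerSemicontinuous fun m => lossSlack ℓ c (X ω - m) + ENNReal.ofReal (ρ m) :=
      (hℓ.lsc_slack.comp (continuous_const.sub continuous_id)).add
        (ENNReal.continuous_ofReal.comp hρ).lowerSemicontinuous
    refine (hF.le_liminf m).trans ?_
    exact hum.liminf_le_liminf_comp
  · exact (hℓ.lsc_slack.measurable.comp (hX.sub_const _)).add_const _
  · rw [← hlim.liminf_eq]
    exact liminf_le_liminf (Eventually.of_forall hu)

/-- Integrating (A3) bounds the totals of acceptable allocations from below. -/
theorem le_sum_of_mem_acceptSet (hℓ : IsLossFunction ℓ c) {X : Ω → Fin d → ℝ}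
    (hX : Measurable X) (hXi : ∀ k, Integrable (fun ω => X ω k) P) {m : Fin d → ℝ}
    (hm : m ∈ acceptSet ℓ P X) : (∫ ω, ∑ k, X ω k ∂P) - c ≤ ∑ k, m k := by
  rw [mem_acceptSet_iff hℓ hX hXi] at hm
  by_contra! hlt
  set ρ : ℝ := (∫ ω, ∑ k, X ω k ∂P) - c - ∑ k, m k
  have hρ : 0 < ρ := sub_pos.2 hlt
  rw [ENNReal.ofReal_of_nonpos (p := -ρ) (by linarith)] at hm
  have h1 : ∫⁻ _, ENNReal.ofReal ρ ∂P ≤ 0 :=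
    (lintegral_mono fun ω => le_add_self).trans hm
  simp at h1
  linarith

/-! ### Nonemptiness of the acceptance set -/

/-- The constant allocation `(n, …, n)` is acceptable for large `n`: if `ℓ x₀ = e < 0`, then
`ℓ(X - n)` is eventually at most `e` at each point, and its positive part is dominated by that of
`ℓ |X|`. -/
theorem acceptSet_nonempty (hℓ : IsLossFunction ℓ c) {X : Ω → Fin d → ℝ}
    (hX : MemOrliczHeart ℓ P X) : (acceptSet ℓ P X).Nonempty := by
  obtain ⟨x₀, hx₀⟩ := iInf_lt_iff.1 hℓ.inf_lt_zero
  obtain ⟨e, he⟩ : ∃ e : ℝ, ℓ x₀ = e :=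
    ⟨(ℓ x₀).toReal, (EReal.coe_toReal (hx₀.trans EReal.zero_lt_top).ne (hℓ.ne_bot _)).symm⟩
  have he0 : e < 0 := by rw [he] at hx₀; exact_mod_cast hx₀
  let Y : ℕ → Ω → EReal := fun n ω => ℓ (X ω - fun _ => (n : ℝ))
  have hY : ∀ n, Measurable (Y n) := fun n => hℓ.measurable_comp (hX.1.sub_const _)
  have hYneg : ∀ n, Measurable fun ω => (-Y n ω).toENNReal := fun n =>
    (measurable_ereal_toENNReal.comp (continuous_neg.measurable.comp (hY n)))
  -- the positive part of `Y n` plus the amount by which its negative part falls short of `-e`;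
  -- it majorises `Y n - e`, is dominated, and vanishes pointwise for large `n`
  let φ : ℕ → Ω → ℝ≥0∞ := fun n ω =>
    (Y n ω).toENNReal + (ENNReal.ofReal (-e) - (-Y n ω).toENNReal)
  have hφ : ∀ n, Measurable (φ n) := fun n =>
    (hY n).ereal_toENNReal.add (measurable_const.sub (hYneg n))
  have hbd : ∀ n ω, φ n ω ≤ (ℓ |(1 : ℝ) • X ω|).toENNReal + ENNReal.ofReal (-e) := by
    intro n ω
    refine add_le_add (EReal.toENNReal_le_toENNReal (hℓ.mono fun k => ?_)) tsub_le_self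
    have h1 := le_abs_self (X ω k)
    have h2 : (0 : ℝ) ≤ n := n.cast_nonneg
    simp
    linarith
  have hlim : Tendsto (fun n => ∫⁻ ω, φ n ω ∂P) atTop (𝓝 (∫⁻ _, 0 ∂P)) := by
    refine tendsto_lintegral_of_dominated_convergence _ hφ
      (fun n => Eventually.of_forall (hbd n)) ?_ (Eventually.of_forall fun ω => ?_)
    · rw [lintegral_add_right _ measurable_const]
      exact ENNReal.add_ne_top.2 ⟨hX.lintegral_ne_top hℓ, by simp⟩
    · refine tendsto_const_nhds.congr' ?_
      filter_upwards [eventually_all.2 fun k =>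
        tendsto_natCast_atTop_atTop.eventually_ge_atTop (X ω k - x₀ k)] with n hn
      have hle : Y n ω ≤ e := by
        rw [← he]
        refine hℓ.mono fun k => ?_
        have := hn k
        simp
        linarith
      have h0 : Y n ω ≤ 0 := hle.trans (by exact_mod_cast he0.le)
      have h1 : ENNReal.ofReal (-e) ≤ (-Y n ω).toENNReal := by
        rw [← EReal.real_coe_toENNReal, EReal.coe_neg]
        exact EReal.toENNReal_le_toENNReal (EReal.neg_le_neg_iff.2 hle)
      simp [φ, EReal.toENNReal_of_nonpos h0, tsub_eq_zero_of_le h1]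
  rw [lintegral_zero] at hlim
  obtain ⟨n, hn⟩ := (hlim.eventually_lt_const
    (ENNReal.ofReal_pos.2 (neg_pos.2 he0))).exists
  refine ⟨fun _ => (n : ℝ), ?_⟩
  change eexp P _ ≤ 0
  rw [eexp_nonpos_iff, ← ENNReal.add_le_add_iff_right (a := ENNReal.ofReal (-e)) (by simp)]
  calc ∫⁻ ω, (Y n ω).toENNReal ∂P + ENNReal.ofReal (-e)
      = ∫⁻ ω, ((Y n ω).toENNReal + ENNReal.ofReal (-e)) ∂P := by
        rw [lintegral_add_right _ measurable_const]; simp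
    _ ≤ ∫⁻ ω, (φ n ω + (-Y n ω).toENNReal) ∂P := by
        refine lintegral_mono fun ω => ?_
        simp only [φ, add_assoc]
        exact add_le_add_right le_tsub_add _
    _ = ∫⁻ ω, φ n ω ∂P + ∫⁻ ω, (-Y n ω).toENNReal ∂P := lintegral_add_left (hφ n) _
    _ ≤ ENNReal.ofReal (-e) + ∫⁻ ω, (-Y n ω).toENNReal ∂P := by gcongr
    _ = _ := add_comm _ _

/-! ### Strict convexity along zero-sum directions -/

/-- Strict convexity along zero-sum directions, as assumed of the loss function. -/
def ZeroSumStrict (ℓ : (Fin d → ℝ) → EReal) : Prop :=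
  ∀ x : Fin d → ℝ, 0 ≤ ℓ x → ∀ u v : Fin d → ℝ, u ≠ v →
    (∑ k, (u k - v k)) = 0 → ∀ a : ℝ, 0 < a → a < 1 →
      ℓ (x + (a • u + (1 - a) • v)) <
        (a : EReal) * ℓ (x + u) + ((1 - a : ℝ) : EReal) * ℓ (x + v)

/-- The base point in the hypothesis is immaterial: a single point `x₁` with `ℓ x₁ ≥ 0`, which (A3)
provides, gives strictness between all `x`, `y` with equal coordinate sums, by taking `u = x - x₁`
and `v = y - x₁`. -/
theorem ZeroSumStrict.midpoint (hℓ : IsLossFunction ℓ c) (hs : ZeroSumStrict ℓ)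
    {x y : Fin d → ℝ} (hxy : x ≠ y) (hsum : ∑ k, (x k - y k) = 0) :
    ℓ ((1 / 2 : ℝ) • x + (1 / 2 : ℝ) • y) <
      ((1 / 2 : ℝ) : EReal) * ℓ x + ((1 / 2 : ℝ) : EReal) * ℓ y := by
  obtain ⟨k₀, -⟩ := Function.ne_iff.1 hxy
  let x₁ : Fin d → ℝ := Pi.single k₀ c
  have hx₁ : 0 ≤ ℓ x₁ := by
    have := hℓ.lower_bound x₁
    simp only [x₁, Finset.sum_pi_single', Finset.mem_univ, if_true] at this
    rwa [← EReal.coe_sub, sub_self, EReal.coe_zero] at this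
  have h := hs x₁ hx₁ (x - x₁) (y - x₁) (fun h => hxy (sub_left_injective h))
    (by simpa using hsum) (1 / 2) (by norm_num) (by norm_num)
  rw [add_sub_cancel, add_sub_cancel, show (1 - 1 / 2 : ℝ) = 1 / 2 by norm_num] at h
  convert h using 2
  module

/-- If a nonzero zero-sum direction exists, then `ℓ` is finite: every point is a midpoint in the
strict inequality, whose left side is therefore below `⊤`. -/
theorem ZeroSumStrict.ne_top (hℓ : IsLossFunction ℓ c) (hs : ZeroSumStrict ℓ)
    {w : Fin d → ℝ} (hw : w ≠ 0) (hw0 : ∑ k, w k = 0) (x : Fin d → ℝ) : ℓ x ≠ ⊤ := by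
  have h := hs.midpoint hℓ (x := x + w) (y := x - w)
    (fun h => hw (by
      have h2 : (2 : ℝ) • w = 0 := by
        have := sub_eq_zero.2 h
        rw [← this]; module
      simpa using h2))
    (by simp [← two_mul, ← Finset.mul_sum, hw0])
  rw [show (1 / 2 : ℝ) • (x + w) + (1 / 2 : ℝ) • (x - w) = x by module] at h
  exact (h.trans_le le_top).ne

/-! ### Finite loss functions -/

section Finite

/-- The real-valued version of a finite loss function; the value is the junk value `0` wherever `ℓ`
is infinite, so it is used only when `ℓ` is finite everywhere. -/
noncomputable def lossReal (ℓ : (Fin d → ℝ) → EReal) (x : Fin d → ℝ) : ℝ := (ℓ x).toReal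

theorem coe_lossReal (hℓ : IsLossFunction ℓ c) (hfin : ∀ x, ℓ x ≠ ⊤) (x : Fin d → ℝ) :
    (lossReal ℓ x : EReal) = ℓ x := EReal.coe_toReal (hfin x) (hℓ.ne_bot x)

theorem convexOn_lossReal (hℓ : IsLossFunction ℓ c) (hfin : ∀ x, ℓ x ≠ ⊤) :
    ConvexOn ℝ Set.univ (lossReal ℓ) := by
  refine ⟨convex_univ, fun x _ y _ a b ha hb hab => ?_⟩
  have h := hℓ.convex x y a b ha hb hab
  simp only [← coe_lossReal hℓ hfin] at h
  exact_mod_cast h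

theorem lossReal_midpoint_lt (hℓ : IsLossFunction ℓ c) (hfin : ∀ x, ℓ x ≠ ⊤)
    (hs : ZeroSumStrict ℓ) {x y : Fin d → ℝ} (hxy : x ≠ y) (hsum : ∑ k, (x k - y k) = 0) :
    lossReal ℓ ((1 / 2 : ℝ) • x + (1 / 2 : ℝ) • y) <
      1 / 2 * lossReal ℓ x + 1 / 2 * lossReal ℓ y := by
  have h := hs.midpoint hℓ hxy hsum
  simp only [← coe_lossReal hℓ hfin] at h
  rw [← EReal.coe_mul, ← EReal.coe_mul, ← EReal.coe_add, EReal.coe_lt_coe_iff] at h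
  exact h

theorem monotone_lossReal (hℓ : IsLossFunction ℓ c) (hfin : ∀ x, ℓ x ≠ ⊤) :
    Monotone (lossReal ℓ) := fun x y hxy => by
  have h := hℓ.mono hxy
  rw [← coe_lossReal hℓ hfin, ← coe_lossReal hℓ hfin] at h
  exact_mod_cast h

theorem le_lossReal (hℓ : IsLossFunction ℓ c) (hfin : ∀ x, ℓ x ≠ ⊤) (x : Fin d → ℝ) :
    ∑ k, x k - c ≤ lossReal ℓ x := by
  have h := hℓ.lower_bound x
  rw [← coe_lossReal hℓ hfin, ← EReal.coe_sub] at h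
  exact EReal.coe_le_coe_iff.1 h

/-- By convexity `ℓ(X - m) ≤ ½ ℓ(2X) + ½ ℓ(-2m)`, and `ℓ(2X) ≤ ℓ |2X|` is controlled by the Orlicz
heart condition; (A3) is the lower bound. -/
theorem integrable_lossReal (hℓ : IsLossFunction ℓ c) (hfin : ∀ x, ℓ x ≠ ⊤)
    {X : Ω → Fin d → ℝ} (hX : MemOrliczHeart ℓ P X) (m : Fin d → ℝ) :
    Integrable (fun ω => lossReal ℓ (X ω - m)) P := by
  have hXi := hX.integrable hℓ
  have hmeas : Measurable (lossReal ℓ) := measurable_ereal_toReal.comp hℓ.lsc.measurable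
  have hab : Measurable fun x : Fin d → ℝ => |(2 : ℝ) • x| := by
    have : Continuous fun x : Fin d → ℝ => |(2 : ℝ) • x| :=
      continuous_pi fun k => by simp only [Pi.abs_apply]; fun_prop
    exact this.measurable
  have h2 : Integrable (fun ω => lossReal ℓ |(2 : ℝ) • X ω|) P := by
    refine integrable_of_eexp_lt_top P (g := fun _ => -c) (hmeas.comp (hab.comp hX.1))
      (integrable_const _) (fun ω => ?_) ?_
    · refine le_trans ?_ (le_lossReal hℓ hfin _)
      have : 0 ≤ ∑ k, |(2 : ℝ) • X ω| k := Finset.sum_nonneg fun k _ => abs_nonneg _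
      linarith
    · simp only [coe_lossReal hℓ hfin]
      exact hX.2 2 two_pos
  refine integrable_of_le_of_le (g₁ := fun ω => ∑ k, X ω k - (∑ k, m k + c))
    (g₂ := fun ω => 1 / 2 * lossReal ℓ |(2 : ℝ) • X ω| + 1 / 2 * lossReal ℓ ((-2 : ℝ) • m))
    (hmeas.comp (hX.1.sub_const m)).aestronglyMeasurable
    (Eventually.of_forall fun ω => ?_) (Eventually.of_forall fun ω => ?_)
    ((integrable_finsetSum _ fun k _ => hXi k).sub (integrable_const _))
    ((h2.const_mul _).add (integrable_const _))
  · have := le_lossReal hℓ hfin (X ω - m)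
    simp only [Pi.sub_apply, Finset.sum_sub_distrib] at this
    simp only
    linarith
  · have h := (convexOn_lossReal hℓ hfin).2 (Set.mem_univ ((2 : ℝ) • X ω))
      (Set.mem_univ ((-2 : ℝ) • m)) (show (0 : ℝ) ≤ 1 / 2 by norm_num)
      (show (0 : ℝ) ≤ 1 / 2 by norm_num) (by norm_num)
    rw [show (1 / 2 : ℝ) • (2 : ℝ) • X ω + (1 / 2 : ℝ) • (-2 : ℝ) • m = X ω - m by module] at h
    have h' := monotone_lossReal hℓ hfin (le_abs_self ((2 : ℝ) • X ω))
    simp only [smul_eq_mul] at h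
    simp only
    linarith

/-- For a finite loss function, acceptability is a condition on a Bochner integral. -/
theorem mem_acceptSet_iff_integral (hℓ : IsLossFunction ℓ c) (hfin : ∀ x, ℓ x ≠ ⊤)
    {X : Ω → Fin d → ℝ} (hX : MemOrliczHeart ℓ P X) (m : Fin d → ℝ) :
    m ∈ acceptSet ℓ P X ↔ ∫ ω, lossReal ℓ (X ω - m) ∂P ≤ 0 := by
  rw [← eexp_coe_nonpos_iff P (integrable_lossReal hℓ hfin hX m)]
  simp only [coe_lossReal hℓ hfin]
  rfl
/-! ### Coercivity -/

/-- Averaging over cyclic shifts: a permutation invariant convex function on the plane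
`{∑ₖ xₖ = d a}` is smallest on the diagonal. -/
theorem diag_le_of_perm {g : (Fin d → ℝ) → ℝ} (hg : ConvexOn ℝ Set.univ g)
    (hperm : ∀ (π : Equiv.Perm (Fin d)) (x : Fin d → ℝ), g (fun k => x (π k)) = g x)
    (a : ℝ) {z : Fin d → ℝ} (hz : ∑ k, z k = 0) : g (fun _ => a) ≤ g (fun k => a + z k) := by
  rcases d with _ | n
  · exact le_of_eq (congrArg g (Subsingleton.elim _ _))
  have hn : ((n : ℝ) + 1) ≠ 0 := by positivity
  have h := hg.map_sum_le (t := Finset.univ) (w := fun _ : Fin (n + 1) => ((n : ℝ) + 1)⁻¹)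
    (p := fun i k => a + z (k + i)) (fun _ _ => by positivity) (by simp [hn])
    (fun _ _ => Set.mem_univ _)
  -- the cyclic shifts of `a + z` average to the constant `a`
  have h1 : ∑ i : Fin (n + 1), ((n : ℝ) + 1)⁻¹ • (fun k => a + z (k + i)) = fun _ => a := by
    funext k
    have : ∑ i, z (k + i) = 0 := by rw [← hz]; exact Equiv.sum_comp (Equiv.addLeft k) z
    simp only [Finset.sum_apply, Pi.smul_apply, smul_eq_mul]
    rw [← Finset.mul_sum, Finset.sum_add_distrib, this]
    simp
    field_simp
  have h2 : ∀ i : Fin (n + 1), g (fun k => a + z (k + i)) = g (fun k => a + z k) :=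
    fun i => hperm (Equiv.addRight i) fun k => a + z k
  rw [h1] at h
  simp only [h2, Finset.sum_const, smul_eq_mul] at h
  simp at h
  rwa [← mul_assoc, mul_inv_cancel₀ hn, one_mul] at h

/-- On each plane `a + {∑ₖ zₖ = 0}` the unique minimum on the diagonal forces linear growth,
so the sublevel set at height `0` is bounded. -/
theorem exists_bound_zeroSum {g : (Fin d → ℝ) → ℝ} (hg : ConvexOn ℝ Set.univ g)
    (hperm : ∀ (π : Equiv.Perm (Fin d)) (x : Fin d → ℝ), g (fun k => x (π k)) = g x)
    (hmid : ∀ x y : Fin d → ℝ, x ≠ y → ∑ k, (x k - y k) = 0 →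
      g ((1 / 2 : ℝ) • x + (1 / 2 : ℝ) • y) < 1 / 2 * g x + 1 / 2 * g y) (a : ℝ) :
    ∃ M, ∀ z : Fin d → ℝ, ∑ k, z k = 0 → g (fun k => a + z k) ≤ 0 → ‖z‖ ≤ M := by
  set g₀ := g (fun _ => a)
  have hlt : ∀ z : Fin d → ℝ, ∑ k, z k = 0 → z ≠ 0 → g₀ < g (fun k => a + z k) := by
    intro z hz hz0
    have h1 := hmid (fun k => a + z k) (fun _ => a)
      (fun h => hz0 (funext fun k => by simpa using congrFun h k)) (by simpa using hz)
    have h2 := diag_le_of_perm hg hperm a (z := (1 / 2 : ℝ) • z)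
      (by simp [← Finset.mul_sum, hz])
    have h3 : ((1 / 2 : ℝ) • (fun k => a + z k) + (1 / 2 : ℝ) • (fun _ => a) : Fin d → ℝ) =
        fun k => a + ((1 / 2 : ℝ) • z) k := by
      funext k; simp; ring
    rw [h3] at h1
    change g₀ ≤ _ at h2
    change _ < 1 / 2 * g (fun k => a + z k) + 1 / 2 * g₀ at h1
    linarith
  have hcont : Continuous fun z : Fin d → ℝ => g (fun k => a + z k) := by
    have : Continuous g := by
      rw [← continuousOn_univ]; exact hg.continuousOn isOpen_univ
    exact this.comp (by fun_prop)
  let K : Set (Fin d → ℝ) := Metric.sphere 0 1 ∩ {z | ∑ k, z k = 0}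
  have hK : IsCompact K :=
    (isCompact_sphere 0 1).inter_right (isClosed_eq (by fun_prop) continuous_const)
  obtain ⟨δ, hδ, hδK⟩ : ∃ δ > 0, ∀ z ∈ K, g₀ + δ ≤ g (fun k => a + z k) := by
    rcases K.eq_empty_or_nonempty with hKe | hKn
    · exact ⟨1, one_pos, by simp [hKe]⟩
    · obtain ⟨z₀, hz₀, hmin⟩ := hK.exists_isMinOn hKn hcont.continuousOn
      have hz₀0 : z₀ ≠ 0 := by
        rintro rfl
        simpa using hz₀.1
      refine ⟨g (fun k => a + z₀ k) - g₀, sub_pos.2 (hlt z₀ hz₀.2 hz₀0), fun z hz => ?_⟩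
      have : g (fun k => a + z₀ k) ≤ g (fun k => a + z k) := hmin hz
      linarith
  -- if `‖z‖ = r > 1` and `g ≤ 0` at `a + z`, convexity between `a` and `a + z` at the point
  -- `a + z / r` gives `g₀ + δ ≤ (1 - 1 / r) g₀`, that is `r ≤ -g₀ / δ`
  refine ⟨max 1 (-g₀ / δ), fun z hz hgz => ?_⟩
  by_contra! hM
  obtain ⟨hr1, hr2⟩ := max_lt_iff.1 hM
  set r := ‖z‖
  have hr : 0 < r := by linarith
  have hzK : r⁻¹ • z ∈ K := by
    refine ⟨?_, ?_⟩
    · simp [norm_smul, r, hr.ne']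
    · simp [← Finset.mul_sum, hz]
  have h1 := hδK _ hzK
  have hri : r⁻¹ ≤ 1 := inv_le_one_of_one_le₀ hr1.le
  have h2 := hg.2 (Set.mem_univ fun _ => a) (Set.mem_univ fun k => a + z k)
    (sub_nonneg.2 hri) (inv_pos.2 hr).le (by ring)
  have h3 : ((1 - r⁻¹) • (fun _ => a) + r⁻¹ • (fun k => a + z k) : Fin d → ℝ) =
      fun k => a + (r⁻¹ • z) k := by
    funext k; simp; ring
  rw [h3] at h2
  simp only [smul_eq_mul] at h2
  change _ ≤ (1 - r⁻¹) * g₀ + _ at h2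
  have h4 : r⁻¹ * g (fun k => a + z k) ≤ 0 := mul_nonpos_of_nonneg_of_nonpos (by positivity) hgz
  have h5 : r⁻¹ * g₀ + δ ≤ 0 := by linarith
  have h6 : g₀ + r * δ ≤ 0 := by
    have := mul_nonpos_of_nonneg_of_nonpos hr.le h5
    rwa [mul_add, mul_inv_cancel_left₀ hr.ne'] at this
  rw [div_lt_iff₀ hδ] at hr2
  linarith

/-- A sublevel set of a finite loss function is bounded once the coordinate sum is bounded below.
By (A3) the mean `τ` of the coordinates is then confined to `[t / d, c / d]`, and by monotonicity
`y - τ` lies in a sublevel set on the single plane through the diagonal point `t / d`. -/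
theorem exists_bound_sublevel (hℓ : IsLossFunction ℓ c) (hfin : ∀ x, ℓ x ≠ ⊤)
    (hperm : ∀ (π : Equiv.Perm (Fin d)) (x : Fin d → ℝ), ℓ (fun k => x (π k)) = ℓ x)
    (hs : ZeroSumStrict ℓ) (t : ℝ) :
    ∃ M, ∀ y : Fin d → ℝ, t ≤ ∑ k, y k → lossReal ℓ y ≤ 0 → ‖y‖ ≤ M := by
  rcases d with _ | n
  · exact ⟨0, fun y _ _ => by rw [Subsingleton.elim y 0, norm_zero]⟩
  have hn : (0 : ℝ) < (n : ℝ) + 1 := by positivity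
  obtain ⟨M, hM⟩ := exists_bound_zeroSum (convexOn_lossReal hℓ hfin)
    (fun π x => by simp only [lossReal, hperm])
    (fun x y hxy h => lossReal_midpoint_lt hℓ hfin hs hxy h) (t / (n + 1))
  refine ⟨M + max |t / (n + 1)| |c / (n + 1)|, fun y hty hy => ?_⟩
  set τ : ℝ := (∑ k, y k) / (n + 1) with hτ
  have hyc : ∑ k, y k ≤ c := by linarith [le_lossReal hℓ hfin y]
  have h1 : t / (n + 1) ≤ τ := by rw [hτ]; gcongr
  have h2 : τ ≤ c / (n + 1) := by rw [hτ]; gcongr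
  let z : Fin (n + 1) → ℝ := fun k => y k - τ
  have hz : ∑ k, z k = 0 := by
    simp only [z, Finset.sum_sub_distrib, Finset.sum_const, Finset.card_univ, Fintype.card_fin,
      nsmul_eq_mul, hτ]
    push_cast
    field_simp
    ring
  have hzM : ‖z‖ ≤ M := by
    refine hM z hz (le_trans (monotone_lossReal hℓ hfin fun k => ?_) hy)
    simp only [z]
    linarith
  have hyz : y = z + fun _ => τ := by funext k; simp [z]
  rw [hyz]
  refine (norm_add_le _ _).trans (add_le_add hzM ((pi_norm_const_le τ).trans ?_))
  exact abs_le_max_abs_abs h1 h2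

end Finite

/-- Accepted allocations of bounded total are bounded. When some nonzero zero-sum direction
exists, `ℓ` is finite and Jensen's inequality `ℓ(E[X] - m) ≤ E[ℓ(X - m)] ≤ 0` reduces the claim to
a sublevel set of `ℓ`; otherwise `d ≤ 1` and the total determines the allocation. -/
theorem exists_bound_acceptSet (hℓ : IsLossFunction ℓ c)
    (hperm : ∀ (π : Equiv.Perm (Fin d)) (x : Fin d → ℝ), ℓ (fun k => x (π k)) = ℓ x)
    (hs : ZeroSumStrict ℓ) {X : Ω → Fin d → ℝ} (hX : MemOrliczHeart ℓ P X) (s : ℝ) :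
    ∃ M, ∀ m ∈ acceptSet ℓ P X, ∑ k, m k ≤ s → ‖m‖ ≤ M := by
  have hXi := hX.integrable hℓ
  by_cases hw : ∃ w : Fin d → ℝ, w ≠ 0 ∧ ∑ k, w k = 0
  · obtain ⟨w, hw, hw0⟩ := hw
    have hfin := hs.ne_top hℓ hw hw0
    have hXint : Integrable X P := Integrable.of_eval hXi
    set b : Fin d → ℝ := ∫ ω, X ω ∂P with hb
    obtain ⟨M, hM⟩ := exists_bound_sublevel hℓ hfin hperm hs (∑ k, b k - s)
    refine ⟨‖b‖ + M, fun m hm hms => ?_⟩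
    have hconv := convexOn_lossReal hℓ hfin
    have hJ := hconv.map_integral_le (f := fun ω => X ω - m) (μ := P)
      (hconv.continuousOn isOpen_univ) isClosed_univ
      (Eventually.of_forall fun _ => Set.mem_univ _) (hXint.sub (integrable_const _))
      (integrable_lossReal hℓ hfin hX m)
    have hbm : ∫ ω, (X ω - m) ∂P = b - m := by
      rw [integral_sub hXint (integrable_const _)]; simp [hb]
    rw [hbm] at hJ
    have hy := hM (b - m) (by simp [Finset.sum_sub_distrib]; linarith)
      (hJ.trans ((mem_acceptSet_iff_integral hℓ hfin hX m).1 hm))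
    calc ‖m‖ = ‖b - (b - m)‖ := by rw [_root_.sub_sub_cancel]
      _ ≤ ‖b‖ + ‖b - m‖ := norm_sub_le _ _
      _ ≤ ‖b‖ + M := by gcongr
  · have hsub : Subsingleton (Fin d) := by
      refine ⟨fun i j => ?_⟩
      by_contra hij
      refine hw ⟨Pi.single i 1 - Pi.single j 1, fun h => ?_, ?_⟩
      · have := congrFun h i
        simp [hij] at this
      · simp [Finset.sum_sub_distrib]
    refine ⟨max |(∫ ω, ∑ k, X ω k ∂P) - c| |s|, fun m hm hms => ?_⟩
    have hlow := le_sum_of_mem_acceptSet hℓ hX.1 hXi hm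
    refine (pi_norm_le_iff_of_nonneg (le_max_of_le_left (abs_nonneg _))).2 fun k => ?_
    rw [Fintype.sum_subsingleton _ k] at hlow hms
    exact abs_le_max_abs_abs hlow hms

/-! ### Existence and uniqueness -/

/-- A risk allocation exists: the total is minimised over a nonempty compact set. -/
theorem exists_isMin_acceptSet (hℓ : IsLossFunction ℓ c)
    (hperm : ∀ (π : Equiv.Perm (Fin d)) (x : Fin d → ℝ), ℓ (fun k => x (π k)) = ℓ x)
    (hs : ZeroSumStrict ℓ) {X : Ω → Fin d → ℝ} (hX : MemOrliczHeart ℓ P X) :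
    ∃ m ∈ acceptSet ℓ P X, ∀ m' ∈ acceptSet ℓ P X, ∑ k, m k ≤ ∑ k, m' k := by
  obtain ⟨m₀, hm₀⟩ := acceptSet_nonempty hℓ hX
  obtain ⟨M, hM⟩ := exists_bound_acceptSet hℓ hperm hs hX (∑ k, m₀ k)
  have hsum : Continuous fun m : Fin d → ℝ => ∑ k, m k := by fun_prop
  let K : Set (Fin d → ℝ) := acceptSet ℓ P X ∩ {m | ∑ k, m k ≤ ∑ k, m₀ k}
  have hK : IsCompact K := by
    refine Metric.isCompact_of_isClosed_isBounded
      ((isClosed_acceptSet hℓ hX.1 (hX.integrable hℓ)).inter (isClosed_le hsum continuous_const))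
      ((Metric.isBounded_closedBall (x := 0) (r := M)).subset fun m hm => ?_)
    simpa using hM m hm.1 hm.2
  obtain ⟨m, hm, hmin⟩ := hK.exists_isMinOn ⟨m₀, hm₀, le_refl (∑ k, m₀ k)⟩ hsum.continuousOn
  refine ⟨m, hm.1, fun m' hm' => ?_⟩
  rcases le_total (∑ k, m' k) (∑ k, m₀ k) with h | h
  · exact hmin ⟨hm', h⟩
  · exact le_trans hm.2 h

/-- Two distinct minimisers would have a midpoint with `E[ℓ(X - m)] < 0`, leaving room to lower
its total. -/
theorem eq_of_isMin_acceptSet (hℓ : IsLossFunction ℓ c) (hs : ZeroSumStrict ℓ)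
    {X : Ω → Fin d → ℝ} (hX : MemOrliczHeart ℓ P X) {m m' : Fin d → ℝ}
    (hm : m ∈ acceptSet ℓ P X) (hm' : m' ∈ acceptSet ℓ P X) (hsum : ∑ k, m k = ∑ k, m' k)
    (hmin : ∀ n ∈ acceptSet ℓ P X, ∑ k, m k ≤ ∑ k, n k) : m = m' := by
  by_contra hne
  have hfin := hs.ne_top hℓ (sub_ne_zero.2 hne) (by simp [Finset.sum_sub_distrib, hsum])
  have hint := integrable_lossReal hℓ hfin hX
  have hconv := convexOn_lossReal hℓ hfin
  rw [mem_acceptSet_iff_integral hℓ hfin hX] at hm hm'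
  set n : Fin d → ℝ := (1 / 2 : ℝ) • m + (1 / 2 : ℝ) • m' with hn
  have hnsum : ∑ k, n k = ∑ k, m k := by
    simp [hn, Finset.sum_add_distrib, ← Finset.mul_sum, ← hsum]
    ring
  -- the average loss at the midpoint is strictly negative
  have hneg : ∫ ω, lossReal ℓ (X ω - n) ∂P < 0 := by
    have hpt : ∀ ω, 0 < 1 / 2 * lossReal ℓ (X ω - m) + 1 / 2 * lossReal ℓ (X ω - m') -
        lossReal ℓ (X ω - n) := fun ω => by
      have h := lossReal_midpoint_lt hℓ hfin hs (x := X ω - m) (y := X ω - m')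
        (fun h => hne (sub_right_injective h)) (by simp [Finset.sum_sub_distrib, hsum])
      rw [show (1 / 2 : ℝ) • (X ω - m) + (1 / 2 : ℝ) • (X ω - m') = X ω - n by
        rw [hn]; module] at h
      linarith
    have hI : Integrable (fun ω => 1 / 2 * lossReal ℓ (X ω - m) +
        1 / 2 * lossReal ℓ (X ω - m')) P :=
      ((hint m).const_mul (1 / 2)).add ((hint m').const_mul (1 / 2))
    have hpos : 0 < ∫ ω, (1 / 2 * lossReal ℓ (X ω - m) + 1 / 2 * lossReal ℓ (X ω - m') -
        lossReal ℓ (X ω - n)) ∂P := by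
      rw [integral_pos_iff_support_of_nonneg (fun ω => (hpt ω).le) (hI.sub (hint n))]
      rw [Function.support_eq_univ fun ω => (hpt ω).ne']
      simp
    rw [integral_sub hI (hint n), integral_add ((hint m).const_mul _) ((hint m').const_mul _),
      integral_const_mul, integral_const_mul] at hpos
    linarith
  -- lowering every coordinate by a small `ε` keeps the allocation acceptable
  set I₀ := ∫ ω, lossReal ℓ (X ω - n) ∂P
  set I₁ := ∫ ω, lossReal ℓ (X ω - (n - 1)) ∂P
  have hden : 0 < |I₁| + 1 - I₀ := by have := abs_nonneg I₁; linarith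
  set ε := -I₀ / (|I₁| + 1 - I₀) with hε
  have hε0 : 0 < ε := div_pos (neg_pos.2 hneg) hden
  have hε1 : ε ≤ 1 := by rw [hε, div_le_one hden]; linarith [abs_nonneg I₁]
  have hεI : ε * (|I₁| + 1 - I₀) = -I₀ := div_mul_cancel₀ _ hden.ne'
  have hacc : n - ε • 1 ∈ acceptSet ℓ P X := by
    rw [mem_acceptSet_iff_integral hℓ hfin hX]
    have hle : ∫ ω, lossReal ℓ (X ω - (n - ε • 1)) ∂P ≤
        ∫ ω, ((1 - ε) * lossReal ℓ (X ω - n) + ε * lossReal ℓ (X ω - (n - 1))) ∂P := by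
      refine integral_mono (hint _) (((hint n).const_mul _).add ((hint (n - 1)).const_mul _))
        fun ω => ?_
      have h := hconv.2 (Set.mem_univ (X ω - n)) (Set.mem_univ (X ω - (n - 1)))
        (sub_nonneg.2 hε1) hε0.le (by ring)
      rw [show (1 - ε) • (X ω - n) + ε • (X ω - (n - 1)) = X ω - (n - ε • 1) by module] at h
      simpa only [smul_eq_mul] using h
    rw [integral_add ((hint n).const_mul _) ((hint (n - 1)).const_mul _), integral_const_mul,
      integral_const_mul] at hle
    change _ ≤ (1 - ε) * I₀ + ε * I₁ at hle
    have h1 : ε * I₁ ≤ ε * |I₁| := mul_le_mul_of_nonneg_left (le_abs_self _) hε0.le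
    linarith
  have hcontra := hmin _ hacc
  obtain ⟨k₀, -⟩ := Function.ne_iff.1 hne
  have hd : (0 : ℝ) < d := by exact_mod_cast Fin.pos k₀
  have : ∑ k, (n - ε • (1 : Fin d → ℝ)) k = ∑ k, m k - d * ε := by
    simp [Finset.sum_sub_distrib, hnsum]
  rw [this] at hcontra
  have := mul_pos hd hε0
  linarith

end

/-- Theorem 3.3 (uniqueness): if moreover `ℓ(x + ·)` is strictly convex along
zero-sum directions whenever `ℓ x ≥ 0`, the risk allocation is unique. -/
theorem riskAllocation_unique
    {Ω : Type*} [MeasurableSpace Ω] (P : Measure Ω) [IsProbabilityMeasure P]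
    {d : ℕ} (ℓ : (Fin d → ℝ) → EReal) (c : ℝ) (hℓ : IsLossFunction ℓ c)
    (hperm : ∀ (π : Equiv.Perm (Fin d)) (x : Fin d → ℝ), ℓ (fun k => x (π k)) = ℓ x)
    (hstrict : ∀ x : Fin d → ℝ, 0 ≤ ℓ x → ∀ u v : Fin d → ℝ, u ≠ v →
      (∑ k, (u k - v k)) = 0 → ∀ a : ℝ, 0 < a → a < 1 →
        ℓ (x + (a • u + (1 - a) • v)) <
          (a : EReal) * ℓ (x + u) + ((1 - a : ℝ) : EReal) * ℓ (x + v))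
    (X : Ω → Fin d → ℝ) (hX : MemOrliczHeart ℓ P X) :
    ∃! m : Fin d → ℝ, m ∈ acceptSet ℓ P X ∧ ∑ k, m k = shortfallRisk ℓ P X := by
  have hs : ZeroSumStrict ℓ := hstrict
  obtain ⟨m, hm, hmin⟩ := exists_isMin_acceptSet hℓ hperm hs hX
  have hR : shortfallRisk ℓ P X = ∑ k, m k :=
    IsLeast.csInf_eq ⟨⟨m, hm, rfl⟩, by rintro _ ⟨m', hm', rfl⟩; exact hmin m' hm'⟩
  refine ⟨m, ⟨hm, hR.symm⟩, fun m' hm' => ?_⟩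
  exact (eq_of_isMin_acceptSet hℓ hs hX hm hm'.1 (by rw [hm'.2, hR]) hmin).symm
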